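/- For every a ∈ Ω, the function ψ_a : ℝ^d → ℝ is continuous. -/

import Mathlib

theorem stmt_4 {d : ℕ} (P A : Set (EuclideanSpace ℝ (Fin d)))
    (hPclosed : IsClosed P) (hPconvex : Convex ℝ P)
    (hPcone : ∀ c : ℝ, 0 ≤ c → ∀ x ∈ P, c • x ∈ P)
    (hPspan : Submodule.span ℝ P = ⊤)
    (hPline : ∀ x ∈ P, -x ∈ P → x = 0)
    (hAne : A.Nonempty) (hAclosed : IsClosed A)
    (hAmod : ∀ x ∈ A, ∀ p ∈ P, x + p ∈ A)
    (hAproper : A ≠ Set.univ)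
    (a : EuclideanSpace ℝ (Fin d)) (ha : a ∈ interior P) :
    Continuous (fun x : EuclideanSpace ℝ (Fin d) => sSup {t : ℝ | x - t • a ∈ A}) := by
  have haP : a ∈ P := interior_subset ha
  obtain ⟨r, hr, hball⟩ := Metric.mem_nhds_iff.1 (mem_interior_iff_mem_nhds.1 ha)
  have hK : 0 ≤ 2 / r := by positivity
  have key : ∀ v : EuclideanSpace ℝ (Fin d), (2 / r * ‖v‖) • a + v ∈ P := by
    intro v
    by_cases hv : v = 0
    · subst hv
      simpa using hPcone 0 le_rfl a haP
    have hvp : 0 < ‖v‖ := norm_pos_iff.2 hv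
    have hs : 0 < 2 / r * ‖v‖ := by positivity
    have h1 : a + (2 / r * ‖v‖)⁻¹ • v ∈ P := by
      apply hball
      rw [Metric.mem_ball, dist_eq_norm, add_sub_cancel_left, norm_smul, Real.norm_eq_abs,
        abs_of_pos (inv_pos.2 hs)]
      have : (2 / r * ‖v‖)⁻¹ * ‖v‖ = r / 2 := by field_simp
      rw [this]
      linarith
    have h2 := hPcone _ hs.le _ h1
    rwa [smul_add, smul_smul, mul_inv_cancel₀ hs.ne', one_smul] at h2
  have move : ∀ x y : EuclideanSpace ℝ (Fin d), ∀ t : ℝ, x - t • a ∈ A →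
      y - (t - 2 / r * ‖y - x‖) • a ∈ A := by
    intro x y t h
    have := hAmod _ h _ (key (y - x))
    convert this using 1
    module
  have hne : ∀ x : EuclideanSpace ℝ (Fin d), {t : ℝ | x - t • a ∈ A}.Nonempty := by
    intro x
    obtain ⟨z, hz⟩ := hAne
    exact ⟨_, move z x 0 (by simpa using hz)⟩
  have hbdd : ∀ x : EuclideanSpace ℝ (Fin d), BddAbove {t : ℝ | x - t • a ∈ A} := by
    intro x
    obtain ⟨w, hw⟩ := (Set.ne_univ_iff_exists_notMem A).1 hAproper
    refine ⟨2 / r * ‖w - x‖, fun t ht => ?_⟩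
    by_contra hlt
    apply hw
    have h2 := hAmod _ (move x w t ht) _
      (hPcone (t - 2 / r * ‖w - x‖) (by linarith [not_le.1 hlt]) a haP)
    simpa using h2
  refine (LipschitzWith.of_le_add_mul ⟨2 / r, hK⟩ fun x y => ?_).continuous
  apply csSup_le (hne x)
  intro t ht
  have h := le_csSup (hbdd y) (move x y t ht)
  rw [dist_comm, dist_eq_norm]
  change t ≤ _ + 2 / r * ‖y - x‖
  linarith
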